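/- Let A = ∑_{j,k=1}^{3} a_{jk}(x) ∂²_{x_j x_k} be a second-order operator on ℝ³ with a_{jk} = a_{kj} ∈ W^{1,∞}_loc(ℝ³) and A uniformly elliptic, i.e. there is λ > 0 with ∑_{j,k} a_{jk}(x) ξ_j ξ_k ≥ λ|ξ|² for all x and all ξ ∈ ℝ³. Then for every s₀, c̃ ∈ ℝ there exist β₀ ≥ 1, r₀ ∈ (0,1) and C > 0 such that for every β ≥ β₀, setting s = s₀ + c̃β, r = |x| and ψ(x) = exp(r^{−β}), and for every u ∈ C_c^∞(B_{r₀} ∖ {0}), one has β² ∫_{ℝ³} r^{−s−β−1} ψ² (|∇u|² + |u|²) dx ≤ C ∫_{ℝ³} r^{−s} ψ² |Au|² dx, where C is independent of β and u. -/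

import Mathlib

open MeasureTheory Real Set

noncomputable section

/-- `i`-th coordinate unit vector of `ℝ³`. -/
def e3 (i : Fin 3) : EuclideanSpace ℝ (Fin 3) := EuclideanSpace.single i 1

/-- Second partial derivative `∂²u/∂x_j ∂x_k` at `x`. -/
def pd2 (u : EuclideanSpace ℝ (Fin 3) → ℝ) (x : EuclideanSpace ℝ (Fin 3)) (j k : Fin 3) : ℝ :=
  fderiv ℝ (fun y => fderiv ℝ u y (e3 j)) x (e3 k)

section CarlemanHelpers

open Topology Filter
open scoped NNReal

abbrev E3 := EuclideanSpace ℝ (Fin 3)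

/-! ### Line derivative rules -/

lemma LD.mul {f g : E3 → ℝ} {f' g' : ℝ} {x v : E3} (hf : HasLineDerivAt ℝ f f' x v)
    (hg : HasLineDerivAt ℝ g g' x v) :
    HasLineDerivAt ℝ (fun z => f z * g z) (f' * g x + f x * g') x v := by
  have := HasDerivAt.fun_mul hf hg
  simpa [HasLineDerivAt] using this

lemma LD.add {f g : E3 → ℝ} {f' g' : ℝ} {x v : E3} (hf : HasLineDerivAt ℝ f f' x v)
    (hg : HasLineDerivAt ℝ g g' x v) :
    HasLineDerivAt ℝ (fun z => f z + g z) (f' + g') x v :=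
  HasDerivAt.add hf hg

lemma LD.sub {f g : E3 → ℝ} {f' g' : ℝ} {x v : E3} (hf : HasLineDerivAt ℝ f f' x v)
    (hg : HasLineDerivAt ℝ g g' x v) :
    HasLineDerivAt ℝ (fun z => f z - g z) (f' - g') x v :=
  HasDerivAt.sub hf hg

lemma LD.cmul {f : E3 → ℝ} {f' : ℝ} {x v : E3} (c : ℝ) (hf : HasLineDerivAt ℝ f f' x v) :
    HasLineDerivAt ℝ (fun z => c * f z) (c * f') x v :=
  HasDerivAt.const_mul c hf

lemma LD.sum {f : Fin 3 → E3 → ℝ} {f' : Fin 3 → ℝ} {x v : E3}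
    (hf : ∀ i, HasLineDerivAt ℝ (f i) (f' i) x v) :
    HasLineDerivAt ℝ (fun z => ∑ i, f i z) (∑ i, f' i) x v :=
  HasDerivAt.fun_sum fun i _ => hf i

lemma LD.coord (x : E3) (i k : Fin 3) :
    HasLineDerivAt ℝ (fun z : E3 => z k) ((e3 i) k) x (e3 i) := by
  have := ((EuclideanSpace.proj k : E3 →L[ℝ] ℝ).hasFDerivAt (x := x)).hasLineDerivAt (e3 i)
  exact this

/-! ### Local Lipschitz -/

/-- Lipschitz near a point. -/
def LipAt (f : E3 → ℝ) (x : E3) : Prop := ∃ K : ℝ≥0, ∃ t ∈ 𝓝 x, LipschitzOnWith K f t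

lemma LipAt.comp₂ {f g : E3 → ℝ} {x : E3} (hf : LipAt f x) (hg : LipAt g x)
    {φ : ℝ × ℝ → ℝ} (hφ : ContDiff ℝ 1 φ) : LipAt (fun z => φ (f z, g z)) x := by
  obtain ⟨K1, t1, h1, L1⟩ := hf
  obtain ⟨K2, t2, h2, L2⟩ := hg
  obtain ⟨K, t, h3, L3⟩ := hφ.locallyLipschitz (f x, g x)
  have c1 : ContinuousAt f x := L1.continuousOn.continuousAt h1
  have c2 : ContinuousAt g x := L2.continuousOn.continuousAt h2
  have c : ContinuousAt (fun z => (f z, g z)) x := c1.prodMk c2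
  refine ⟨K * max K1 K2, t1 ∩ t2 ∩ (fun z => (f z, g z)) ⁻¹' t,
    inter_mem (inter_mem h1 h2) (c h3), ?_⟩
  refine LipschitzOnWith.comp (g := φ) L3 (f := fun z => (f z, g z)) ?_ (fun z hz => hz.2)
  exact (L1.mono fun z hz => hz.1.1).prodMk (L2.mono fun z hz => hz.1.2)

lemma LipAt.mul {f g : E3 → ℝ} {x : E3} (hf : LipAt f x) (hg : LipAt g x) :
    LipAt (fun z => f z * g z) x := hf.comp₂ hg (φ := fun p => p.1 * p.2) (by fun_prop)
lemma LipAt.add {f g : E3 → ℝ} {x : E3} (hf : LipAt f x) (hg : LipAt g x) :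
    LipAt (fun z => f z + g z) x := hf.comp₂ hg (φ := fun p => p.1 + p.2) (by fun_prop)
lemma LipAt.sub {f g : E3 → ℝ} {x : E3} (hf : LipAt f x) (hg : LipAt g x) :
    LipAt (fun z => f z - g z) x := hf.comp₂ hg (φ := fun p => p.1 - p.2) (by fun_prop)
lemma LipAt.cmul {f : E3 → ℝ} {x : E3} (c : ℝ) (hf : LipAt f x) :
    LipAt (fun z => c * f z) x := hf.comp₂ hf (φ := fun p => c * p.1) (by fun_prop)
lemma LipAt.sum {f : Fin 3 → E3 → ℝ} {x : E3} (hf : ∀ i, LipAt (f i) x) :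
    LipAt (fun z => ∑ i, f i z) x := by
  simp only [Fin.sum_univ_three]
  exact ((hf 0).add (hf 1)).add (hf 2)
lemma LipAt.of_contDiffAt {f : E3 → ℝ} {x : E3} (hf : ContDiffAt ℝ 1 f x) : LipAt f x :=
  hf.exists_lipschitzOnWith

lemma e3_norm (i : Fin 3) : ‖e3 i‖ = 1 := by simp [e3]

/-- A locally Lipschitz function vanishing outside the unit ball is Lipschitz. -/
lemma lipschitz_of_local {f : E3 → ℝ} (hf : ∀ x, LipAt f x) (h0 : ∀ x, 1 ≤ ‖x‖ → f x = 0) :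
    ∃ K : ℝ≥0, LipschitzWith K f := by
  have hl : LocallyLipschitz f := hf
  obtain ⟨K, hK⟩ := (hl.locallyLipschitzOn (s := Metric.closedBall 0 2)).exists_lipschitzOnWith_of_compact
    (isCompact_closedBall (0 : E3) 2)
  refine ⟨3 * K, LipschitzWith.of_dist_le_mul fun x y => ?_⟩
  have key : ∀ x y : E3, ‖x‖ < 1 → dist (f x) (f y) ≤ (3 * K : ℝ≥0) * dist x y := by
    intro x y hx
    have hxm : x ∈ Metric.closedBall (0 : E3) 2 := by simp; linarith
    by_cases hy : ‖y‖ ≤ 2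
    · refine (hK.dist_le_mul x hxm y (by simpa using hy)).trans ?_
      gcongr
      exact le_mul_of_one_le_left (zero_le) (by norm_num)
    · push Not at hy
      have hp : ‖(2 : ℝ) • e3 0‖ = 2 := by rw [norm_smul, e3_norm]; norm_num
      have h1 := hK.dist_le_mul x hxm ((2 : ℝ) • e3 0) (by simp [hp])
      rw [h0 ((2 : ℝ) • e3 0) (by rw [hp]; norm_num)] at h1
      rw [h0 y (by linarith)]
      have h2 : dist x ((2 : ℝ) • e3 0) ≤ 3 := by
        rw [dist_eq_norm]
        refine (norm_sub_le _ _).trans ?_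
        rw [hp]; linarith
      have h3 : 1 ≤ dist x y := by
        rw [dist_eq_norm, norm_sub_rev]
        have := norm_sub_norm_le y x
        linarith
      have hKn : (0 : ℝ) ≤ K := K.2
      calc _ ≤ _ := h1
        _ ≤ K * 3 := by gcongr
        _ ≤ K * 3 * dist x y := le_mul_of_one_le_right (by positivity) h3
        _ = _ := by push_cast; ring
  by_cases hx : ‖x‖ < 1
  · exact key x y hx
  by_cases hy : ‖y‖ < 1
  · rw [dist_comm, dist_comm x]; exact key y x hy
  · rw [h0 x (by linarith), h0 y (by linarith), dist_self]
    positivity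

lemma integral_lineDeriv_zero {f : E3 → ℝ} {K : ℝ≥0} (hf : LipschitzWith K f)
    (hc : HasCompactSupport f) (v : E3) :
    Integrable (fun x => lineDeriv ℝ f x v) ∧ ∫ x, lineDeriv ℝ f x v = 0 := by
  constructor
  · have hm := hf.memLp_lineDeriv (μ := volume) v
    have hs : Function.support (fun x => lineDeriv ℝ f x v) ⊆ tsupport f := by
      intro x hx
      by_contra h
      apply hx
      have : f =ᶠ[𝓝 x] fun _ => 0 := notMem_tsupport_iff_eventuallyEq.1 h
      simp only [this.lineDeriv_eq]
      simp [lineDeriv]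
    have hi : IntegrableOn (fun x => lineDeriv ℝ f x v) (tsupport f) :=
      (hf.locallyIntegrable_lineDeriv (μ := volume) v).integrableOn_isCompact hc
    exact (integrableOn_iff_integrable_of_support_subset hs).1 hi
  · have h := LipschitzWith.integral_lineDeriv_mul_eq (μ := (volume : Measure E3))
      (LipschitzWith.const (1 : ℝ) (α := E3)) hf hc (-v)
    simp only [neg_neg, mul_one] at h
    rw [← h]
    simp [lineDeriv]
/-- Algebraic divergence identity. -/
lemma alg_identity (a : Fin 3 → Fin 3 → ℝ) (d : Fin 3 → Fin 3 → Fin 3 → ℝ)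
    (ha : ∀ j k, a j k = a k j) (hd : ∀ i j k, d i j k = d i k j)
    (h : Fin 3 → Fin 3 → ℝ) (hh : ∀ i j, h i j = h j i)
    (x p y P : Fin 3 → ℝ) (w G H K γ B Z T : ℝ)
    (hy : ∀ l, y l = ∑ k, a l k * x k) (hP : ∀ j, P j = ∑ k, a j k * p k)
    (hγ : γ = ∑ l, x l * y l) (hB : B = ∑ j, p j * P j) (hZ : Z = ∑ l, y l * p l)
    (hT : T = 2 * (G * Z) + 2 * (H * γ * w))
    (δ : Fin 3 → Fin 3 → ℝ) (hδ : ∀ i j, δ i j = if j = i then 1 else 0)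
    (Y P' : Fin 3 → Fin 3 → ℝ) (γ' B' Z' T' : Fin 3 → ℝ)
    (hY : ∀ i l, Y i l = ∑ k, (d i l k * x k + a l k * δ i k))
    (hP' : ∀ i j, P' i j = ∑ k, (d i j k * p k + a j k * h i k))
    (hγ' : ∀ i, γ' i = ∑ l, (δ i l * y l + x l * Y i l))
    (hB' : ∀ i, B' i = ∑ l, (h i l * P l + p l * P' i l))
    (hZ' : ∀ i, Z' i = ∑ l, (Y i l * p l + y l * h i l))
    (hT' : ∀ i, T' i = 2 * (H * x i * Z + G * Z' i)
       + 2 * ((K * x i * γ + H * γ' i) * w + H * γ * p i)) :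
    ∑ j, ((P' j j * T + P j * T' j)
        - ((H * x j * y j + G * Y j j) * B + G * y j * B' j)
        + ((((H * x j * G + G * (H * x j)) * γ + G * G * γ' j) * (G * y j)
            + G * G * γ * (H * x j * y j + G * Y j j)) * (w * w)
            + G * G * γ * (G * y j) * (p j * w + w * p j)))
    = ((∑ j, ∑ k, d j j k * p k) + (∑ j, ∑ k, a j k * h j k) + G * G * γ * w) * T
      + (2 * H * Z ^ 2 + H * γ * B + G ^ 2 * H * γ ^ 2 * w ^ 2)
      + 2 * G * (∑ j, P j * P j)
      + 2 * G * (∑ j, ∑ l, P j * p l * ∑ k, d j l k * x k)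
      - G * ((∑ j, a j j) + ∑ j, ∑ k, d j j k * x k) * B
      - G * (∑ l, y l * ∑ j, ∑ k, d l j k * p j * p k)
      + w * (∑ j, P j * (2 * K * x j * γ + 2 * H * (2 * y j + ∑ k, ∑ l, d j k l * x k * x l)))
      + w ^ 2 * G ^ 3 * (γ * ((∑ j, a j j) + ∑ j, ∑ k, d j j k * x k)
          + 2 * (∑ l, y l * y l) + ∑ l, y l * ∑ j, ∑ k, d l j k * x j * x k) := by
  have hYY : ∀ i l, Y i l = (∑ k, d i l k * x k) + a l i := by
    intro i l
    rw [hY, Finset.sum_add_distrib]; simp [hδ]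
  have hg2 : ∀ i, γ' i = 2 * y i + ∑ k, ∑ l, d i k l * x k * x l := by
    intro i
    rw [hγ']
    simp only [hYY, hy, hδ, Fin.sum_univ_three]
    fin_cases i <;> simp [ha 1 0, ha 2 0, ha 2 1] <;> ring
  have hBB : ∀ i, B' i = 2 * (∑ l, h i l * P l) + ∑ j, ∑ k, d i j k * p j * p k := by
    intro i
    rw [hB']
    simp only [hP', hP, Fin.sum_univ_three]
    rw [ha 1 0, ha 2 0, ha 2 1]; ring
  have hxP : x 0 * P 0 + x 1 * P 1 + x 2 * P 2 = Z := by
    rw [hZ]; simp only [hP, hy, Fin.sum_univ_three]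
    rw [ha 1 0, ha 2 0, ha 2 1]; ring
  have e1 : ∑ j, P' j j = (∑ j, ∑ k, d j j k * p k) + (∑ j, ∑ k, a j k * h j k) := by
    simp only [hP', Finset.sum_add_distrib]
  have e2 : ∑ j, ∑ l, P j * (a l j * p l) = ∑ j, P j * P j := by
    refine Finset.sum_congr rfl fun j _ => ?_
    rw [← Finset.mul_sum]
    conv_rhs => rw [hP j]
    simp only [ha _ j, hP j]
  obtain ⟨c, hc⟩ : ∃ c : Fin 3 → Fin 3 → ℝ, ∀ j l, c j l = ∑ k, d j l k * x k := ⟨_, fun _ _ => rfl⟩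
  obtain ⟨Dp, hDp⟩ : ∃ c : Fin 3 → ℝ, ∀ i, c i = ∑ j, ∑ k, d i j k * p j * p k :=
    ⟨_, fun _ => rfl⟩
  obtain ⟨Dx, hDx⟩ : ∃ c : Fin 3 → ℝ, ∀ i, c i = ∑ j, ∑ k, d i j k * x j * x k :=
    ⟨_, fun _ => rfl⟩
  rw [← e1]
  simp only [← hc, ← hDp, ← hDx] at hYY hg2 hBB ⊢
  simp only [hT', hZ', hYY, hg2, hBB]
  clear hYY hg2 hBB e1 hc hDp hDx hP' hγ' hB' hZ' hT' hY hy hP hδ hd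
  simp only [Fin.sum_univ_three] at *
  rw [hh 1 0, hh 2 0, hh 2 1]
  subst hT
  linear_combination 2 * H * Z * hxP + 2 * G * e2 + (H * B - 4 * H * G^2*γ*w^2 + H * G^2*γ*w^2)* hγ - 2 * H * γ * hB
    - 2 * G^3*γ*w*hZ

/-! ### The flux -/

def yF (a : Fin 3 → Fin 3 → E3 → ℝ) (l : Fin 3) (z : E3) : ℝ := ∑ k, a l k z * z k
def PF (a : Fin 3 → Fin 3 → E3 → ℝ) (p : Fin 3 → E3 → ℝ) (j : Fin 3) (z : E3) : ℝ :=
  ∑ k, a j k z * p k z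
def gF (a : Fin 3 → Fin 3 → E3 → ℝ) (z : E3) : ℝ := ∑ l, z l * yF a l z
def BF (a : Fin 3 → Fin 3 → E3 → ℝ) (p : Fin 3 → E3 → ℝ) (z : E3) : ℝ := ∑ l, p l z * PF a p l z
def ZF (a : Fin 3 → Fin 3 → E3 → ℝ) (p : Fin 3 → E3 → ℝ) (z : E3) : ℝ := ∑ l, yF a l z * p l z
def TF (a : Fin 3 → Fin 3 → E3 → ℝ) (w G H : E3 → ℝ) (p : Fin 3 → E3 → ℝ) (z : E3) : ℝ :=
  2 * (G z * ZF a p z) + 2 * (H z * gF a z * w z)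
def VF (a : Fin 3 → Fin 3 → E3 → ℝ) (w G H : E3 → ℝ) (p : Fin 3 → E3 → ℝ) (j : Fin 3) (z : E3) :
    ℝ :=
  PF a p j z * TF a w G H p z - G z * yF a j z * BF a p z
    + G z * G z * gF a z * (G z * yF a j z) * (w z * w z)

lemma VF_lipAt {a : Fin 3 → Fin 3 → E3 → ℝ} {w G H : E3 → ℝ} {p : Fin 3 → E3 → ℝ} {x : E3}
    (ha : ∀ j k, LipAt (a j k) x) (hw : LipAt w x) (hG : LipAt G x) (hH : LipAt H x)
    (hp : ∀ j, LipAt (p j) x) (j : Fin 3) : LipAt (VF a w G H p j) x := by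
  have hx : ∀ k, LipAt (fun z : E3 => z k) x := fun k =>
    LipAt.of_contDiffAt (EuclideanSpace.proj k : E3 →L[ℝ] ℝ).contDiff.contDiffAt
  have hy : ∀ l, LipAt (yF a l) x := fun l => LipAt.sum fun k => (ha l k).mul (hx k)
  have hP : ∀ l, LipAt (PF a p l) x := fun l => LipAt.sum fun k => (ha l k).mul (hp k)
  have hg : LipAt (gF a) x := LipAt.sum fun k => (hx k).mul (hy k)
  have hB : LipAt (BF a p) x := LipAt.sum fun k => (hp k).mul (hP k)
  have hZ : LipAt (ZF a p) x := LipAt.sum fun k => (hy k).mul (hp k)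
  have hT : LipAt (TF a w G H p) x := ((hG.mul hZ).cmul 2).add (((hH.mul hg).mul hw).cmul 2)
  exact (((hP j).mul hT).sub ((hG.mul (hy j)).mul hB)).add
    ((((hG.mul hG).mul hg).mul (hG.mul (hy j))).mul (hw.mul hw))

lemma VF_lineDeriv {a : Fin 3 → Fin 3 → E3 → ℝ} {w G H : E3 → ℝ} {p : Fin 3 → E3 → ℝ} {x : E3}
    {d : Fin 3 → Fin 3 → Fin 3 → ℝ} {h : Fin 3 → Fin 3 → ℝ} {K : ℝ}
    (hsym : ∀ j k, a j k = a k j) (hdsym : ∀ i j k, d i j k = d i k j)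
    (hh : ∀ i j, h i j = h j i)
    (ha : ∀ i j k, HasLineDerivAt ℝ (a j k) (d i j k) x (e3 i))
    (hw : ∀ i, HasLineDerivAt ℝ w (p i x) x (e3 i))
    (hp : ∀ i j, HasLineDerivAt ℝ (p j) (h i j) x (e3 i))
    (hG : ∀ i, HasLineDerivAt ℝ G (H x * x i) x (e3 i))
    (hH : ∀ i, HasLineDerivAt ℝ H (K * x i) x (e3 i)) :
    ∑ j, lineDeriv ℝ (VF a w G H p j) x (e3 j)
    = ((∑ j, ∑ k, d j j k * p k x) + (∑ j, ∑ k, a j k x * h j k) + G x * G x * gF a x * w x)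
        * TF a w G H p x
      + ((2 * H x * ZF a p x ^ 2 + H x * gF a x * BF a p x
          + G x ^ 2 * H x * gF a x ^ 2 * w x ^ 2)
      + 2 * G x * (∑ j, PF a p j x * PF a p j x)
      + 2 * G x * (∑ j, ∑ l, PF a p j x * p l x * ∑ k, d j l k * x k)
      - G x * ((∑ j, a j j x) + ∑ j, ∑ k, d j j k * x k) * BF a p x
      - G x * (∑ l, yF a l x * ∑ j, ∑ k, d l j k * p j x * p k x)
      + w x * (∑ j, PF a p j x * (2 * K * x j * gF a x
          + 2 * H x * (2 * yF a j x + ∑ k, ∑ l, d j k l * x k * x l)))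
      + w x ^ 2 * G x ^ 3 * (gF a x * ((∑ j, a j j x) + ∑ j, ∑ k, d j j k * x k)
          + 2 * (∑ l, yF a l x * yF a l x) + ∑ l, yF a l x * ∑ j, ∑ k, d l j k * x j * x k)) := by
  have hy : ∀ i l, HasLineDerivAt ℝ (yF a l) _ x (e3 i) := fun i l =>
    LD.sum fun k => LD.mul (ha i l k) (LD.coord x i k)
  have hP : ∀ i l, HasLineDerivAt ℝ (PF a p l) _ x (e3 i) := fun i l =>
    LD.sum fun k => LD.mul (ha i l k) (hp i k)
  have hg : ∀ i, HasLineDerivAt ℝ (gF a) _ x (e3 i) := fun i =>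
    LD.sum fun k => LD.mul (LD.coord x i k) (hy i k)
  have hB : ∀ i, HasLineDerivAt ℝ (BF a p) _ x (e3 i) := fun i =>
    LD.sum fun k => LD.mul (hp i k) (hP i k)
  have hZ : ∀ i, HasLineDerivAt ℝ (ZF a p) _ x (e3 i) := fun i =>
    LD.sum fun k => LD.mul (hy i k) (hp i k)
  have hT : ∀ i, HasLineDerivAt ℝ (TF a w G H p) _ x (e3 i) := fun i =>
    LD.add (LD.cmul 2 (LD.mul (hG i) (hZ i))) (LD.cmul 2 (LD.mul (LD.mul (hH i) (hg i)) (hw i)))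
  have hV : ∀ i, HasLineDerivAt ℝ (VF a w G H p i) _ x (e3 i) := fun i =>
    LD.add (LD.sub (LD.mul (hP i i) (hT i)) (LD.mul (LD.mul (hG i) (hy i i)) (hB i)))
      (LD.mul (LD.mul (LD.mul (LD.mul (hG i) (hG i)) (hg i)) (LD.mul (hG i) (hy i i)))
        (LD.mul (hw i) (hw i)))
  have hV' : ∀ i, lineDeriv ℝ (VF a w G H p i) x (e3 i) = _ := fun i => (hV i).lineDeriv
  simp only [hV']
  have := alg_identity (fun j k => a j k x) d (fun j k => by rw [hsym]) hdsym h hh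
    (fun i => x i) (fun i => p i x) (fun l => yF a l x) (fun l => PF a p l x)
    (w x) (G x) (H x) K (gF a x) (BF a p x) (ZF a p x) (TF a w G H p x)
    (fun _ => rfl) (fun _ => rfl) rfl rfl rfl rfl
    (fun i j => e3 i j) (fun i j => by simp [e3, Pi.single_apply]) _ _ _ _ _ _
    (fun _ _ => rfl) (fun _ _ => rfl) (fun _ => rfl) (fun _ => rfl) (fun _ => rfl) (fun _ => rfl)
  refine (Eq.trans ?_ this).trans ?_
  · rfl
  · ring

/-! ### Radial weights -/

def GW (β s : ℝ) (x : E3) : ℝ := -β * ‖x‖ ^ (-β - 2) + -(s / 2) * ‖x‖ ^ (-2 : ℝ)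
def HW (β s : ℝ) (x : E3) : ℝ := β * (β + 2) * ‖x‖ ^ (-β - 4) + s * ‖x‖ ^ (-4 : ℝ)
def KW (β s : ℝ) (x : E3) : ℝ :=
  -(β * (β + 2) * (β + 4)) * ‖x‖ ^ (-β - 6) + -(4 * s) * ‖x‖ ^ (-6 : ℝ)
def WW (β s : ℝ) (x : E3) : ℝ := ‖x‖ ^ (-s / 2) * Real.exp (‖x‖ ^ (-β))
def wF (β s : ℝ) (u : E3 → ℝ) (x : E3) : ℝ := WW β s x * u x
def pF (β s : ℝ) (u : E3 → ℝ) (j : Fin 3) (x : E3) : ℝ :=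
  WW β s x * (fderiv ℝ u x (e3 j) + u x * (GW β s x * x j))
def hF (β s : ℝ) (u : E3 → ℝ) (x : E3) (i j : Fin 3) : ℝ :=
  WW β s x * (GW β s x * x i) * (fderiv ℝ u x (e3 j) + u x * (GW β s x * x j))
  + WW β s x * (pd2 u x j i + (fderiv ℝ u x (e3 i) * (GW β s x * x j)
    + u x * (HW β s x * x i * x j + GW β s x * e3 i j)))

lemma LD.eq {f : E3 → ℝ} {f' f'' : ℝ} {x v : E3} (hf : HasLineDerivAt ℝ f f' x v)
    (h : f'' = f') : HasLineDerivAt ℝ f f'' x v := h ▸ hf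

lemma LD.rpow {x : E3} (hx : x ≠ 0) (c : ℝ) (i : Fin 3) :
    HasLineDerivAt ℝ (fun z : E3 => ‖z‖ ^ c) (c * ‖x‖ ^ (c - 2) * x i) x (e3 i) := by
  have hx0 : 0 < ‖x‖ := norm_pos_iff.2 hx
  have h1 := (hasStrictFDerivAt_norm_sq x).hasFDerivAt
  have h2 := h1.rpow_const (p := c / 2) (Or.inl (by positivity))
  have h3 := h2.hasLineDerivAt (e3 i)
  have e1 : (fun z : E3 => (‖z‖ ^ 2) ^ (c / 2)) = fun z => ‖z‖ ^ c := by
    funext z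
    rw [← Real.rpow_natCast, ← Real.rpow_mul (norm_nonneg _)]
    congr 1; push_cast; ring
  rw [e1] at h3
  refine LD.eq h3 ?_
  have e2 : (‖x‖ ^ 2) ^ (c / 2 - 1) = ‖x‖ ^ (c - 2) := by
    rw [← Real.rpow_natCast, ← Real.rpow_mul (norm_nonneg _)]
    congr 1; push_cast; ring
  simp [e2, e3, EuclideanSpace.inner_single_right]
  ring

lemma GW_ld {x : E3} (hx : x ≠ 0) (β s : ℝ) (i : Fin 3) :
    HasLineDerivAt ℝ (GW β s) (HW β s x * x i) x (e3 i) := by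
  have := LD.add (LD.cmul (-β) (LD.rpow hx (-β - 2) i)) (LD.cmul (-(s / 2)) (LD.rpow hx (-2) i))
  refine LD.eq this ?_
  rw [HW, show -β - 2 - 2 = -β - 4 by ring, show (-2 - 2 : ℝ) = -4 by norm_num]; ring

lemma HW_ld {x : E3} (hx : x ≠ 0) (β s : ℝ) (i : Fin 3) :
    HasLineDerivAt ℝ (HW β s) (KW β s x * x i) x (e3 i) := by
  have := LD.add (LD.cmul (β * (β + 2)) (LD.rpow hx (-β - 4) i)) (LD.cmul s (LD.rpow hx (-4) i))
  refine LD.eq this ?_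
  rw [KW, show -β - 4 - 2 = -β - 6 by ring, show (-4 - 2 : ℝ) = -6 by norm_num]; ring

lemma WW_ld {x : E3} (hx : x ≠ 0) (β s : ℝ) (i : Fin 3) :
    HasLineDerivAt ℝ (WW β s) (WW β s x * (GW β s x * x i)) x (e3 i) := by
  have hx0 : 0 < ‖x‖ := norm_pos_iff.2 hx
  have h1 : HasLineDerivAt ℝ (fun z : E3 => Real.exp (‖z‖ ^ (-β)))
      (Real.exp (‖x‖ ^ (-β)) * (-β * ‖x‖ ^ (-β - 2) * x i)) x (e3 i) := by
    have := HasDerivAt.exp (LD.rpow hx (-β) i)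
    simpa [HasLineDerivAt] using this
  have := LD.mul (LD.rpow hx (-s / 2) i) h1
  refine LD.eq this ?_
  rw [WW, GW, Real.rpow_sub hx0 (-s/2) 2, Real.rpow_neg hx0.le 2]
  field_simp
  ring

lemma contDiffAt_rp {x : E3} (hx : x ≠ 0) (c : ℝ) {n} :
    ContDiffAt ℝ n (fun z : E3 => ‖z‖ ^ c) x :=
  (contDiffAt_norm ℝ hx).rpow_const_of_ne (norm_ne_zero_iff.2 hx)

lemma GW_cd {x : E3} (hx : x ≠ 0) (β s : ℝ) {n} : ContDiffAt ℝ n (GW β s) x :=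
  (contDiffAt_const.mul (contDiffAt_rp hx _)).add (contDiffAt_const.mul (contDiffAt_rp hx _))
lemma HW_cd {x : E3} (hx : x ≠ 0) (β s : ℝ) {n} : ContDiffAt ℝ n (HW β s) x :=
  (contDiffAt_const.mul (contDiffAt_rp hx _)).add (contDiffAt_const.mul (contDiffAt_rp hx _))
lemma WW_cd {x : E3} (hx : x ≠ 0) (β s : ℝ) {n} : ContDiffAt ℝ n (WW β s) x :=
  (contDiffAt_rp hx _).mul (contDiffAt_rp hx _).exp

lemma fderiv_cd {u : E3 → ℝ} (hu : ContDiff ℝ (⊤ : ℕ∞) u) (v : E3) :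
    ContDiff ℝ (⊤ : ℕ∞) (fun y => fderiv ℝ u y v) := by
  have : ContDiff ℝ (⊤ : ℕ∞) (fderiv ℝ u) := hu.fderiv_right (by simp)
  exact this.clm_apply contDiff_const

lemma pd2_cont {u : E3 → ℝ} (hu : ContDiff ℝ (⊤ : ℕ∞) u) (j k : Fin 3) :
    Continuous (fun x => pd2 u x j k) := (fderiv_cd (fderiv_cd hu (e3 j)) (e3 k)).continuous

lemma pd2_symm {u : E3 → ℝ} (hu : ContDiff ℝ (⊤ : ℕ∞) u) (x : E3) (j k : Fin 3) :
    pd2 u x j k = pd2 u x k j := by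
  have h1 : IsSymmSndFDerivAt ℝ u x := by
    refine ContDiffAt.isSymmSndFDerivAt (hu.contDiffAt (x := x)) ?_
    rw [minSmoothness_of_isRCLikeNormedField]
    exact WithTop.coe_le_coe.2 (le_top : (2 : ℕ∞) ≤ ⊤)
  have h2 : DifferentiableAt ℝ (fderiv ℝ u) x := by
    have : ContDiff ℝ (⊤ : ℕ∞) (fderiv ℝ u) := hu.fderiv_right (by simp)
    exact this.contDiffAt.differentiableAt (by simp)
  have h3 : ∀ j k, pd2 u x j k = fderiv ℝ (fderiv ℝ u) x (e3 k) (e3 j) := by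
    intro j k
    rw [pd2, fderiv_clm_apply h2 (differentiableAt_const _)]
    simp
  rw [h3, h3]
  exact h1 _ _

lemma hF_symm {u : E3 → ℝ} (hu : ContDiff ℝ (⊤ : ℕ∞) u) (β s : ℝ) (x : E3) (i j : Fin 3) :
    hF β s u x i j = hF β s u x j i := by
  rw [hF, hF, pd2_symm hu x j i]
  have : e3 i j = e3 j i := by simp [e3, eq_comm]
  rw [this]; ring

lemma wF_ld {u : E3 → ℝ} (hu : ContDiff ℝ (⊤ : ℕ∞) u) {x : E3} (hx : x ≠ 0) (β s : ℝ) (i : Fin 3) :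
    HasLineDerivAt ℝ (wF β s u) (pF β s u i x) x (e3 i) := by
  have h0 := (hu.contDiffAt.differentiableAt (x := x) (by simp)).hasFDerivAt.hasLineDerivAt (e3 i)
  have := LD.mul (WW_ld hx β s i) h0
  refine LD.eq this ?_
  rw [pF]; ring

lemma pF_ld {u : E3 → ℝ} (hu : ContDiff ℝ (⊤ : ℕ∞) u) {x : E3} (hx : x ≠ 0) (β s : ℝ)
    (i j : Fin 3) :
    HasLineDerivAt ℝ (pF β s u j) (hF β s u x i j) x (e3 i) := by
  have h0 := (hu.contDiffAt.differentiableAt (x := x) (by simp)).hasFDerivAt.hasLineDerivAt (e3 i)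
  have h1 : HasLineDerivAt ℝ (fun y => fderiv ℝ u y (e3 j)) (pd2 u x j i) x (e3 i) :=
    ((fderiv_cd hu (e3 j)).contDiffAt.differentiableAt
      (x := x) (by simp)).hasFDerivAt.hasLineDerivAt (e3 i)
  exact LD.mul (WW_ld hx β s i) (LD.add h1 (LD.mul h0 (LD.mul (GW_ld hx β s i) (LD.coord x i j))))

/-- conjugated operator -/
lemma conj_identity (a : Fin 3 → Fin 3 → E3 → ℝ) (hsym : ∀ j k, a j k = a k j) (u : E3 → ℝ)
    (x : E3) (β s : ℝ) :
    WW β s x * (∑ j, ∑ k, a j k x * pd2 u x j k) = (∑ j, ∑ k, a j k x * hF β s u x j k)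
      + GW β s x * GW β s x * gF a x * wF β s u x - 2 * (GW β s x * ZF a (pF β s u) x)
      - (HW β s x * gF a x + GW β s x * ∑ j, a j j x) * wF β s u x := by
  have h1 : (∑ j, ∑ k, a j k x * hF β s u x j k) = ∑ j, ∑ k, a j k x * hF β s u x k j := by
    rw [Finset.sum_comm]
    refine Finset.sum_congr rfl fun j _ => Finset.sum_congr rfl fun k _ => by rw [hsym]
  have hδ : ∀ i j : Fin 3, (e3 i) j = if j = i then 1 else 0 := fun i j => by simp [e3]
  rw [h1]
  simp only [hF, gF, ZF, yF, pF, wF, hδ, Fin.sum_univ_three]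
  rw [hsym 1 0, hsym 2 0, hsym 2 1]
  simp
  ring

lemma fderiv_norm_sq_le (L : E3 →L[ℝ] ℝ) : ‖L‖ ^ 2 ≤ ∑ i, (L (e3 i)) ^ 2 := by
  have h : ‖L‖ ≤ √(∑ i, (L (e3 i)) ^ 2) := by
    refine L.opNorm_le_bound (Real.sqrt_nonneg _) fun z => ?_
    have hz : L z = ∑ i, L (e3 i) * z i := by
      have h1 : z = ∑ i, z i • e3 i := by
        ext j; fin_cases j <;> simp [e3, Fin.sum_univ_three]
      conv_lhs => rw [h1]
      simp [mul_comm]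
    rw [hz, EuclideanSpace.norm_eq, Real.norm_eq_abs]
    refine (Real.abs_le_sqrt (y := (∑ i, (L (e3 i)) ^ 2) * ∑ i, z i ^ 2) ?_).trans_eq ?_
    · exact Finset.sum_mul_sq_le_sq_mul_sq _ _ _
    · rw [Real.sqrt_mul (by positivity)]; simp
  calc _ ≤ √(∑ i, (L (e3 i)) ^ 2) ^ 2 := by gcongr
    _ = _ := Real.sq_sqrt (by positivity)


lemma abs_sum3 {f : Fin 3 → ℝ} {c : ℝ} (h : ∀ i, |f i| ≤ c) : |∑ i, f i| ≤ 3 * c := by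
  refine (Finset.abs_sum_le_sum_abs _ _).trans ?_
  refine (Finset.sum_le_sum fun i _ => h i).trans ?_
  simp

lemma abs_mul_le' {a b c d : ℝ} (h1 : |a| ≤ c) (h2 : |b| ≤ d) : |a * b| ≤ c * d := by
  rw [abs_mul]
  exact mul_le_mul h1 h2 (abs_nonneg _) ((abs_nonneg _).trans h1)

lemma alg_bounds (a : Fin 3 → Fin 3 → ℝ) (d : Fin 3 → Fin 3 → Fin 3 → ℝ)
    (x p y P : Fin 3 → ℝ) (w G H K γ B Z M r pn lam : ℝ)
    (hM : 0 ≤ M) (ha : ∀ j k, |a j k| ≤ M) (hd : ∀ i j k, |d i j k| ≤ M)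
    (hr : 0 ≤ r) (hr1 : r ≤ 1) (hx : ∀ i, |x i| ≤ r) (hpn : 0 ≤ pn) (hp : ∀ i, |p i| ≤ pn)
    (hy : ∀ l, y l = ∑ k, a l k * x k) (hP : ∀ j, P j = ∑ k, a j k * p k)
    (hγ : γ = ∑ l, x l * y l) (hB : B = ∑ j, p j * P j)
    (hlam : 0 ≤ lam) (hH : 0 ≤ H)
    (hγ0 : lam * r ^ 2 ≤ γ) (hB0 : lam * pn ^ 2 ≤ B) :
    (lam ^ 2 * (H * r ^ 2) * pn ^ 2 + lam ^ 2 * (G ^ 2 * (H * r ^ 2)) * r ^ 2 * w ^ 2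
      - 405 * M ^ 2 * |G| * pn ^ 2
      - |w| * pn * M ^ 2 * (162 * |K| * r ^ 3 + 270 * H * r)
      - 243 * M ^ 2 * |G| ^ 3 * r ^ 2 * w ^ 2 ≤
      (2 * H * Z ^ 2 + H * γ * B + G ^ 2 * H * γ ^ 2 * w ^ 2)
      + 2 * G * (∑ j, P j * P j)
      + 2 * G * (∑ j, ∑ l, P j * p l * ∑ k, d j l k * x k)
      - G * ((∑ j, a j j) + ∑ j, ∑ k, d j j k * x k) * B
      - G * (∑ l, y l * ∑ j, ∑ k, d l j k * p j * p k)
      + w * (∑ j, P j * (2 * K * x j * γ + 2 * H * (2 * y j + ∑ k, ∑ l, d j k l * x k * x l)))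
      + w ^ 2 * G ^ 3 * (γ * ((∑ j, a j j) + ∑ j, ∑ k, d j j k * x k)
          + 2 * (∑ l, y l * y l) + ∑ l, y l * ∑ j, ∑ k, d l j k * x j * x k))
    ∧ |-(∑ j, ∑ k, d j j k * p k) + (H * γ - G * ∑ j, a j j) * w| ≤
      9 * M * pn + |w| * (9 * M * (H * r ^ 2) + 3 * M * |G|) := by
  have by_ : ∀ l, |y l| ≤ 3 * (M * r) := fun l => by
    rw [hy]; exact abs_sum3 fun k => abs_mul_le' (ha _ _) (hx _)
  have bP : ∀ l, |P l| ≤ 3 * (M * pn) := fun l => by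
    rw [hP]; exact abs_sum3 fun k => abs_mul_le' (ha _ _) (hp _)
  have bγ : |γ| ≤ 3 * (r * (3 * (M * r))) := by
    rw [hγ]; exact abs_sum3 fun k => abs_mul_le' (hx _) (by_ _)
  have bB : |B| ≤ 3 * (pn * (3 * (M * pn))) := by
    rw [hB]; exact abs_sum3 fun k => abs_mul_le' (hp _) (bP _)
  have btr : |∑ j, a j j| ≤ 3 * M := abs_sum3 fun k => ha _ _
  have bdx : ∀ j l, |∑ k, d j l k * x k| ≤ 3 * (M * r) := fun j l =>
    abs_sum3 fun k => abs_mul_le' (hd _ _ _) (hx _)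
  have bb : |∑ j, ∑ k, d j j k * x k| ≤ 3 * (3 * (M * r)) := abs_sum3 fun j => bdx j j
  have bbp : |∑ j, ∑ k, d j j k * p k| ≤ 3 * (3 * (M * pn)) := abs_sum3 fun j =>
    abs_sum3 fun k => abs_mul_le' (hd _ _ _) (hp _)
  have btb : |(∑ j, a j j) + ∑ j, ∑ k, d j j k * x k| ≤ 12 * M := by
    refine (abs_add_le _ _).trans ?_
    nlinarith
  have bdpp : ∀ l, |∑ j, ∑ k, d l j k * p j * p k| ≤ 3 * (3 * (M * pn * pn)) := fun l =>
    abs_sum3 fun j => abs_sum3 fun k => abs_mul_le' (abs_mul_le' (hd _ _ _) (hp _)) (hp _)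
  have bdxx : ∀ l, |∑ j, ∑ k, d l j k * x j * x k| ≤ 3 * (3 * (M * r * r)) := fun l =>
    abs_sum3 fun j => abs_sum3 fun k => abs_mul_le' (abs_mul_le' (hd _ _ _) (hx _)) (hx _)
  have hMr : M * r ≤ M := by nlinarith
  have hGn := abs_nonneg G
  have hwn := abs_nonneg w
  have hKn := abs_nonneg K
  -- E1
  have E1 : |2 * G * (∑ j, P j * P j)| ≤ 54 * M ^ 2 * |G| * pn ^ 2 := by
    refine (abs_mul_le' (c := 2 * |G|) (by simp [abs_mul])
      (abs_sum3 fun j => abs_mul_le' (bP j) (bP j))).trans (le_of_eq (by ring))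
  have E2 : |2 * G * (∑ j, ∑ l, P j * p l * ∑ k, d j l k * x k)|
      ≤ 162 * M ^ 2 * |G| * pn ^ 2 := by
    refine (abs_mul_le' (c := 2 * |G|) (by simp [abs_mul])
      (abs_sum3 fun j => abs_sum3 fun l =>
        abs_mul_le' (abs_mul_le' (bP j) (hp l)) (bdx j l))).trans ?_
    calc _ = 162 * M * |G| * pn ^ 2 * (M * r) := by ring
      _ ≤ 162 * M * |G| * pn ^ 2 * M := by gcongr
      _ = _ := by ring
  have E3 : |G * ((∑ j, a j j) + ∑ j, ∑ k, d j j k * x k) * B| ≤ 108 * M ^ 2 * |G| * pn ^ 2 :=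
    (abs_mul_le' (abs_mul_le' le_rfl btb) bB).trans (le_of_eq (by ring))
  have E4 : |G * (∑ l, y l * ∑ j, ∑ k, d l j k * p j * p k)| ≤ 81 * M ^ 2 * |G| * pn ^ 2 := by
    refine (abs_mul_le' le_rfl (abs_sum3 fun l => abs_mul_le' (by_ l) (bdpp l))).trans ?_
    calc _ = 81 * M * |G| * pn ^ 2 * (M * r) := by ring
      _ ≤ 81 * M * |G| * pn ^ 2 * M := by gcongr
      _ = _ := by ring
  have E5 : |w * (∑ j, P j * (2 * K * x j * γ
      + 2 * H * (2 * y j + ∑ k, ∑ l, d j k l * x k * x l)))|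
      ≤ |w| * pn * M ^ 2 * (162 * |K| * r ^ 3 + 270 * H * r) := by
    have h1 : ∀ j, |2 * K * x j * γ + 2 * H * (2 * y j + ∑ k, ∑ l, d j k l * x k * x l)|
        ≤ 18 * M * |K| * r ^ 3 + 30 * M * H * r := by
      intro j
      refine (abs_add_le _ _).trans ?_
      have h2 : |2 * K * x j * γ| ≤ 18 * M * |K| * r ^ 3 :=
        (abs_mul_le' (abs_mul_le' (c := 2 * |K|) (by simp [abs_mul]) (hx j)) bγ).trans
          (le_of_eq (by ring))
      have h3 : |2 * y j + ∑ k, ∑ l, d j k l * x k * x l| ≤ 15 * (M * r) := by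
        refine (abs_add_le _ _).trans ?_
        have h4 := bdxx j
        have h5 : |2 * y j| ≤ 2 * (3 * (M * r)) := abs_mul_le' (by simp) (by_ j)
        have h6 : M * r * r ≤ M * r := mul_le_of_le_one_right (by positivity) hr1
        linarith
      have h4 : |2 * H * (2 * y j + ∑ k, ∑ l, d j k l * x k * x l)| ≤ 2 * H * (15 * (M * r)) :=
        abs_mul_le' (by simp [abs_mul, abs_of_nonneg hH]) h3
      linarith
    refine (abs_mul_le' le_rfl (abs_sum3 fun l => abs_mul_le' (bP l) (h1 l))).trans
      (le_of_eq (by ring))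
  have E6 : |w ^ 2 * G ^ 3 * (γ * ((∑ j, a j j) + ∑ j, ∑ k, d j j k * x k)
          + 2 * (∑ l, y l * y l) + ∑ l, y l * ∑ j, ∑ k, d l j k * x j * x k)|
      ≤ 243 * M ^ 2 * |G| ^ 3 * r ^ 2 * w ^ 2 := by
    have h1 : |γ * ((∑ j, a j j) + ∑ j, ∑ k, d j j k * x k)
          + 2 * (∑ l, y l * y l) + ∑ l, y l * ∑ j, ∑ k, d l j k * x j * x k|
          ≤ 243 * M ^ 2 * r ^ 2 := by
      refine (abs_add_le _ _).trans ?_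
      have h0 := abs_add_le (γ * ((∑ j, a j j) + ∑ j, ∑ k, d j j k * x k))
        (2 * (∑ l, y l * y l))
      have h2 := abs_mul_le' bγ btb
      have h3 : |2 * (∑ l, y l * y l)| ≤ 2 * (3 * ((3 * (M * r)) * (3 * (M * r)))) :=
        abs_mul_le' (by simp) (abs_sum3 fun l => abs_mul_le' (by_ l) (by_ l))
      have h4 : |∑ l, y l * ∑ j, ∑ k, d l j k * x j * x k| ≤
        3 * (3 * (M * r) * (3 * (3 * (M * r * r)))) :=
        abs_sum3 fun l => abs_mul_le' (by_ l) (bdxx l)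
      have h5 : 3 * (3 * (M * r) * (3 * (3 * (M * r * r)))) ≤ 81 * M ^ 2 * r ^ 2 := by
        calc _ = 81 * M ^ 2 * r ^ 2 * r := by ring
          _ ≤ 81 * M ^ 2 * r ^ 2 * 1 := by gcongr
          _ = _ := by ring
      nlinarith
    refine (abs_mul_le' (c := w ^ 2 * |G| ^ 3) (by simp [abs_mul]) h1).trans
      (le_of_eq (by ring))
  have hγn : 0 ≤ γ := le_trans (by positivity) hγ0
  have m1 : lam ^ 2 * (H * r ^ 2) * pn ^ 2 ≤ H * γ * B := by
    calc _ = H * (lam * r ^ 2) * (lam * pn ^ 2) := by ring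
      _ ≤ _ := by gcongr
  have m2 : lam ^ 2 * (G ^ 2 * (H * r ^ 2)) * r ^ 2 * w ^ 2 ≤ G ^ 2 * H * γ ^ 2 * w ^ 2 := by
    calc _ = G ^ 2 * H * (lam * r ^ 2) ^ 2 * w ^ 2 := by ring
      _ ≤ _ := by gcongr
  have m3 : 0 ≤ 2 * H * Z ^ 2 := by positivity
  constructor
  · linarith [neg_le_of_abs_le E1, neg_le_of_abs_le E2, le_of_abs_le E3, le_of_abs_le E4,
      neg_le_of_abs_le E5, neg_le_of_abs_le E6]
  · refine (abs_add_le _ _).trans ?_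
    rw [abs_neg]
    have h1 : |H * γ - G * ∑ j, a j j| ≤ 9 * M * (H * r ^ 2) + 3 * M * |G| := by
      refine (abs_sub _ _).trans ?_
      have h2 := abs_mul_le' (abs_of_nonneg hH).le bγ
      have h3 := abs_mul_le' (le_refl |G|) btr
      linarith
    have h2 := abs_mul_le' h1 (le_refl |w|)
    linarith

lemma alg_final (w G H K M r pn lam N β t E S T R Q D : ℝ)
    (hM : 0 ≤ M) (hr : 0 < r) (hpn : 0 ≤ pn)
    (hlam : 0 < lam) (hN : 1 ≤ N) (hβ : 1 ≤ β) (hβ2 : 48000 * M ^ 2 ≤ lam ^ 2 * β)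
    (ht0 : 0 < t) (ht : t * (N * r ^ 2) = 1) (htβ : t * β ≤ 1)
    (hG1 : N * β / 2 ≤ |G|) (hG2 : |G| ≤ 2 * (N * β))
    (hH1 : N * β ^ 2 ≤ H * r ^ 2) (hH2 : H * r ^ 2 ≤ 4 * (N * β ^ 2))
    (hK : |K| * r ^ 4 ≤ 20 * (N * β ^ 3))
    (hQ : lam ^ 2 * (H * r ^ 2) * pn ^ 2 + lam ^ 2 * (G ^ 2 * (H * r ^ 2)) * r ^ 2 * w ^ 2
      - 405 * M ^ 2 * |G| * pn ^ 2
      - |w| * pn * M ^ 2 * (162 * |K| * r ^ 3 + 270 * H * r)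
      - 243 * M ^ 2 * |G| ^ 3 * r ^ 2 * w ^ 2 ≤ Q)
    (hR : |R| ≤ 9 * M * pn + |w| * (9 * M * (H * r ^ 2) + 3 * M * |G|))
    (hE : E = S - T + R) (hD : D = S * T + Q) :
    lam ^ 2 / 8 * (N * β ^ 2 * pn ^ 2 + N ^ 3 * β ^ 4 * r ^ 2 * w ^ 2) ≤ E ^ 2 / 2 + D := by
  set Y2 := N * β ^ 2 * pn ^ 2 with hY2
  set Z2 := N ^ 3 * β ^ 4 * r ^ 2 * w ^ 2 with hZ2
  have hY0 : 0 ≤ Y2 := by positivity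
  have hZ0 : 0 ≤ Z2 := by positivity
  have hw := abs_nonneg w
  have hN0 : 0 < N := by linarith
  have hβ0 : 0 < β := by linarith
  have htle : t ≤ 1 / β := by rwa [le_div_iff₀ hβ0]
  have m1 : lam ^ 2 * Y2 ≤ lam ^ 2 * (H * r ^ 2) * pn ^ 2 := by
    rw [hY2, mul_assoc (lam ^ 2)]; gcongr
  have m2 : lam ^ 2 / 4 * Z2 ≤ lam ^ 2 * (G ^ 2 * (H * r ^ 2)) * r ^ 2 * w ^ 2 := by
    calc _ = lam ^ 2 * ((N * β / 2) ^ 2 * (N * β ^ 2)) * r ^ 2 * w ^ 2 := by rw [hZ2]; ring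
      _ ≤ lam ^ 2 * (|G| ^ 2 * (H * r ^ 2)) * r ^ 2 * w ^ 2 := by gcongr
      _ = _ := by rw [sq_abs]
  have e1 : 405 * M ^ 2 * |G| * pn ^ 2 ≤ 810 * (M ^ 2 / β) * Y2 := by
    calc _ ≤ 405 * M ^ 2 * (2 * (N * β)) * pn ^ 2 := by gcongr
      _ = _ := by rw [hY2]; field_simp; ring
  have hin : r⁻¹ = t * N * r := by field_simp; linarith
  have e2 : |w| * pn * M ^ 2 * (162 * |K| * r ^ 3 + 270 * H * r)
      ≤ 2160 * (M ^ 2 / β) * (Y2 + Z2) := by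
    have k1 : |K| * r ^ 3 ≤ 20 * (N * β ^ 3) * (t * N * r) := by
      rw [← hin, ← div_eq_mul_inv, le_div_iff₀ hr]; linarith
    have k2 : H * r ≤ 4 * (N * β ^ 3) * (t * N * r) := by
      rw [← hin, ← div_eq_mul_inv, le_div_iff₀ hr]
      have : N * β ^ 2 ≤ N * β ^ 3 := by gcongr <;> simp_all
      linarith
    have k3 : 162 * |K| * r ^ 3 + 270 * H * r ≤ 4320 * (t * (N ^ 2 * β ^ 3 * r)) := by
      linarith
    have k4 : 2 * (|w| * pn * (N ^ 2 * β ^ 3 * r)) ≤ Y2 + Z2 := by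
      have := mul_nonneg (mul_nonneg hN0.le (sq_nonneg β)) (sq_nonneg (pn - N * β * r * |w|))
      have h2 : |w| ^ 2 = w ^ 2 := sq_abs w
      rw [hY2, hZ2, ← h2]
      linarith
    calc _ ≤ |w| * pn * M ^ 2 * (4320 * (t * (N ^ 2 * β ^ 3 * r))) := by gcongr
      _ = 2160 * M ^ 2 * t * (2 * (|w| * pn * (N ^ 2 * β ^ 3 * r))) := by ring
      _ ≤ 2160 * M ^ 2 * (1 / β) * (Y2 + Z2) := by gcongr
      _ = _ := by ring
  have e3 : 243 * M ^ 2 * |G| ^ 3 * r ^ 2 * w ^ 2 ≤ 1944 * (M ^ 2 / β) * Z2 := by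
    calc _ ≤ 243 * M ^ 2 * (2 * (N * β)) ^ 3 * r ^ 2 * w ^ 2 := by gcongr
      _ = _ := by rw [hZ2]; field_simp; ring
  have e4 : R ^ 2 / 2 ≤ 81 * (M ^ 2 / β) * Y2 + 1764 * (M ^ 2 / β) * Z2 := by
    have h1 : |R| ≤ 9 * M * pn + |w| * (42 * M * (N * β ^ 2)) := by
      refine hR.trans ?_
      have q0 : N * β ≤ N * β ^ 2 := by gcongr; exact le_self_pow₀ hβ two_ne_zero
      have q1 := mul_le_mul_of_nonneg_left hH2 hM
      have q2 : M * |G| ≤ M * (2 * (N * β ^ 2)) := by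
        refine mul_le_mul_of_nonneg_left ?_ hM
        linarith
      have : 9 * M * (H * r ^ 2) + 3 * M * |G| ≤ 42 * M * (N * β ^ 2) := by linarith
      gcongr
    have h2 : R ^ 2 ≤ (9 * M * pn + |w| * (42 * M * (N * β ^ 2))) ^ 2 := by
      rw [← sq_abs R]; gcongr
    have h3 := sq_nonneg (9 * M * pn - |w| * (42 * M * (N * β ^ 2)))
    have h4 : R ^ 2 / 2 ≤ 81 * M ^ 2 * pn ^ 2 + 1764 * M ^ 2 * (N ^ 2 * β ^ 4 * |w| ^ 2) := by
      linarith
    rw [sq_abs] at h4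
    have h5 : pn ^ 2 ≤ 1 / β * Y2 := by
      rw [hY2]
      have : 1 / β * (N * β ^ 2 * pn ^ 2) = N * β * pn ^ 2 := by field_simp
      rw [this]
      exact le_mul_of_one_le_left (sq_nonneg _) (one_le_mul_of_one_le_of_one_le hN hβ)
    have h6 : N ^ 2 * β ^ 4 * w ^ 2 ≤ 1 / β * Z2 := by
      calc _ = t * (N * r ^ 2) * (N ^ 2 * β ^ 4 * w ^ 2) := by rw [ht, one_mul]
        _ = t * Z2 := by rw [hZ2]; ring
        _ ≤ _ := by gcongr
    calc _ ≤ _ := h4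
      _ ≤ 81 * M ^ 2 * (1 / β * Y2) + 1764 * M ^ 2 * (1 / β * Z2) := by gcongr
      _ = _ := by ring
  have hc : M ^ 2 / β * 6000 ≤ lam ^ 2 / 8 := by
    rw [div_mul_eq_mul_div, div_le_iff₀ hβ0]; linarith
  have hmb : 0 ≤ M ^ 2 / β := by positivity
  have hc1 := mul_le_mul_of_nonneg_right hc hY0
  have hc2 := mul_le_mul_of_nonneg_right hc hZ0
  have n1 := mul_nonneg hmb hY0
  have n2 := mul_nonneg hmb hZ0
  have n3 := mul_nonneg (sq_nonneg lam) hY0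
  have hST : -(E ^ 2 / 2) - R ^ 2 / 2 ≤ S * T := by
    subst hE
    have q1 := sq_nonneg (S + T)
    have q2 := sq_nonneg (S - T + R + R)
    clear_value Y2 Z2
    linarith only [q1, q2]
  subst hD
  linarith

/-! ### Pointwise estimate -/

lemma radial_bounds {x : E3} (hx : x ≠ 0) (hr : ‖x‖ ≤ 1 / 3) {β s : ℝ} (hβ : 1 ≤ β)
    (hs : |s| ≤ β ^ 2) :
    1 ≤ ‖x‖ ^ (-β - 2) ∧ 1 ≤ ‖x‖ ^ (-β - 2) * ‖x‖ ∧ 0 < ‖x‖ ^ β ∧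
    ‖x‖ ^ β * (‖x‖ ^ (-β - 2) * ‖x‖ ^ 2) = 1 ∧ ‖x‖ ^ β * β ≤ 1 ∧
    ‖x‖ ^ (-β - 2) * β / 2 ≤ |GW β s x| ∧ |GW β s x| ≤ 2 * (‖x‖ ^ (-β - 2) * β) ∧
    ‖x‖ ^ (-β - 2) * β ^ 2 ≤ HW β s x * ‖x‖ ^ 2 ∧
    HW β s x * ‖x‖ ^ 2 ≤ 4 * (‖x‖ ^ (-β - 2) * β ^ 2) ∧
    |KW β s x| * ‖x‖ ^ 4 ≤ 20 * (‖x‖ ^ (-β - 2) * β ^ 3) := by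
  have hr0 : 0 < ‖x‖ := norm_pos_iff.2 hx
  rw [GW, HW, KW]
  set r := ‖x‖ with hrdef
  clear_value r
  set N := r ^ (-β - 2) with hN
  set t := r ^ β with ht
  have hβ0 : 0 < β := by linarith
  have hN0 : 0 < N := Real.rpow_pos_of_pos hr0 _
  have ht0 : 0 < t := Real.rpow_pos_of_pos hr0 _
  have n2 : ∀ c : ℝ, r ^ c * r ^ 2 = r ^ (c + 2) := fun c => by
    rw [Real.rpow_add hr0]; norm_num
  have n4 : ∀ c : ℝ, r ^ c * r ^ 4 = r ^ (c + 4) := fun c => by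
    rw [Real.rpow_add hr0]; norm_num
  have e2 : r ^ (-2 : ℝ) = t * N := by
    rw [hN, ht, ← Real.rpow_add hr0]; congr 1; ring
  have h1 : 1 ≤ N := Real.one_le_rpow_of_pos_of_le_one_of_nonpos hr0 (by linarith) (by linarith)
  have h2 : 1 ≤ N * r := by
    have : N * r = r ^ (-β - 1) := by
      rw [hN, show -β - 1 = (-β - 2) + 1 by ring, Real.rpow_add hr0]; norm_num
    rw [this]
    exact Real.one_le_rpow_of_pos_of_le_one_of_nonpos hr0 (by linarith) (by linarith)
  have h3 : t * (N * r ^ 2) = 1 := by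
    rw [n2, ht, ← Real.rpow_add hr0]; ring_nf; simp
  have h4 : t * β ≤ 1 := by
    have q1 : t ≤ (1 / 3 : ℝ) ^ β := Real.rpow_le_rpow hr0.le hr hβ0.le
    have q2 : 1 + β * 2 ≤ (1 + 2 : ℝ) ^ β := one_add_mul_self_le_rpow_one_add (by norm_num) hβ
    have q3 : (1 / 3 : ℝ) ^ β * 3 ^ β = 1 := by
      rw [← Real.mul_rpow (by norm_num) (by norm_num)]; norm_num
    norm_num at q2
    calc t * β ≤ (1 / 3 : ℝ) ^ β * 3 ^ β := by
          gcongr; linarith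
      _ = 1 := q3
  have hst : |s * t| ≤ β := by
    rw [abs_mul, abs_of_pos ht0]
    calc |s| * t ≤ β ^ 2 * t := by gcongr
      _ = β * (t * β) := by ring
      _ ≤ β * 1 := by gcongr
      _ = β := mul_one _
  obtain ⟨hs1, hs2⟩ := abs_le.1 hst
  have hG : -β * N + -(s / 2) * r ^ (-2 : ℝ) = -(N * (β + s * t / 2)) := by rw [e2]; ring
  have hH : (β * (β + 2) * r ^ (-β - 4) + s * r ^ (-4 : ℝ)) * r ^ 2
      = N * (β * (β + 2) + s * t) := by
    have q1 := n2 (-β - 4)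
    have q2 := n2 (-4)
    rw [show -β - 4 + 2 = -β - 2 by ring, ← hN] at q1
    rw [show (-4 + 2 : ℝ) = -2 by norm_num, e2] at q2
    linear_combination β * (β + 2) * q1 + s * q2
  have hK : (-(β * (β + 2) * (β + 4)) * r ^ (-β - 6) + -(4 * s) * r ^ (-6 : ℝ)) * r ^ 4
      = -(N * (β * (β + 2) * (β + 4) + 4 * (s * t))) := by
    have q1 := n4 (-β - 6)
    have q2 := n4 (-6)
    rw [show -β - 6 + 4 = -β - 2 by ring, ← hN] at q1
    rw [show (-6 + 4 : ℝ) = -2 by norm_num, e2] at q2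
    linear_combination -(β * (β + 2) * (β + 4)) * q1 - 4 * s * q2
  have hK' : ∀ z : ℝ, |z| * r ^ 4 = |z * r ^ 4| := fun z => by
    rw [abs_mul, abs_of_pos (pow_pos hr0 4)]
  rw [hG, hH, hK', hK, abs_neg, abs_neg, abs_mul, abs_mul, abs_of_pos hN0,
    abs_of_pos (by linarith : 0 < β + s * t / 2),
    abs_of_pos (by nlinarith [mul_pos hβ0 hβ0, pow_pos hβ0 3] :
      0 < β * (β + 2) * (β + 4) + 4 * (s * t))]
  have b2 : β ≤ β ^ 2 := by nlinarith
  have b3 : β ^ 2 ≤ β ^ 3 := by nlinarith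
  refine ⟨h1, h2, ht0, h3, h4, ?_, ?_, ?_, ?_, ?_⟩
  · rw [mul_div_assoc]; gcongr; linarith
  · rw [mul_left_comm]; gcongr; linarith
  · gcongr; nlinarith
  · rw [mul_left_comm]; gcongr; nlinarith
  · rw [mul_left_comm 20]
    refine mul_le_mul_of_nonneg_left ?_ hN0.le
    nlinarith

lemma pointwise (a : Fin 3 → Fin 3 → E3 → ℝ) (hsym : ∀ j k, a j k = a k j)
    {lam M β s : ℝ} (hlam : 0 < lam) (hM : 0 ≤ M) {x : E3} (hx : x ≠ 0) (hr : ‖x‖ ≤ 1 / 3)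
    (hell : ∀ ξ : Fin 3 → ℝ, lam * ∑ j, (ξ j) ^ 2 ≤ ∑ j, ∑ k, a j k x * ξ j * ξ k)
    (ha : ∀ j k, |a j k x| ≤ M) (hda : ∀ i j k, |lineDeriv ℝ (a j k) x (e3 i)| ≤ M)
    (hdiff : ∀ i j k, LineDifferentiableAt ℝ (a j k) x (e3 i))
    (hβ : 1 ≤ β) (hs : |s| ≤ β ^ 2) (hβ2 : 48000 * M ^ 2 ≤ lam ^ 2 * β)
    {u : E3 → ℝ} (hu : ContDiff ℝ (⊤ : ℕ∞) u) :
    lam ^ 2 / 72 * (β ^ 2 * (‖x‖ ^ (-s - β - 1) * Real.exp (‖x‖ ^ (-β)) ^ 2 *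
      (‖fderiv ℝ u x‖ ^ 2 + u x ^ 2))) ≤
    (‖x‖ ^ (-s) * Real.exp (‖x‖ ^ (-β)) ^ 2 * (∑ j, ∑ k, a j k x * pd2 u x j k) ^ 2) / 2 +
    ∑ j, lineDeriv ℝ (VF a (wF β s u) (GW β s) (HW β s) (pF β s u) j) x (e3 j) := by
  have hr0 : 0 < ‖x‖ := norm_pos_iff.2 hx
  obtain ⟨hN, hNr, ht0, ht, htβ, hG1, hG2, hH1, hH2, hK⟩ := radial_bounds hx hr hβ hs
  have hD := VF_lineDeriv (a := a) (w := wF β s u) (G := GW β s) (H := HW β s) (p := pF β s u)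
    (x := x) (d := fun i j k => lineDeriv ℝ (a j k) x (e3 i)) (h := hF β s u x) (K := KW β s x)
    hsym (fun i j k => by rw [hsym]) (hF_symm hu β s x) (fun i j k => (hdiff i j k).hasLineDerivAt)
    (wF_ld hu hx β s) (pF_ld hu hx β s) (GW_ld hx β s) (HW_ld hx β s)
  set pn := √(∑ j, (pF β s u j x) ^ 2) with hpn
  have hpn0 : 0 ≤ pn := Real.sqrt_nonneg _
  have hpn2 : pn ^ 2 = ∑ j, (pF β s u j x) ^ 2 := Real.sq_sqrt (by positivity)
  have hpi : ∀ i, |pF β s u i x| ≤ pn := fun i => by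
    refine Real.abs_le_sqrt ?_
    exact Finset.single_le_sum (f := fun i => (pF β s u i x) ^ 2) (fun _ _ => sq_nonneg _)
      (Finset.mem_univ i)
  have hx2 : ∑ i, x i ^ 2 = ‖x‖ ^ 2 := by
    rw [EuclideanSpace.norm_sq_eq]; simp
  have hxi : ∀ i, |x i| ≤ ‖x‖ := fun i => by
    simpa using PiLp.norm_apply_le x i
  have hg0 : lam * ‖x‖ ^ 2 ≤ gF a x := by
    rw [← hx2]
    refine (hell fun i => x i).trans_eq ?_
    simp only [gF, yF, Finset.mul_sum]
    refine Finset.sum_congr rfl fun j _ => Finset.sum_congr rfl fun k _ => by ring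
  have hB0 : lam * pn ^ 2 ≤ BF a (pF β s u) x := by
    rw [hpn2]
    refine (hell fun i => pF β s u i x).trans_eq ?_
    simp only [BF, PF, Finset.mul_sum]
    refine Finset.sum_congr rfl fun j _ => Finset.sum_congr rfl fun k _ => by ring
  have hH0 : 0 ≤ HW β s x := by
    by_contra h
    push Not at h
    have : HW β s x * ‖x‖ ^ 2 < 0 := mul_neg_of_neg_of_pos h (by positivity)
    have : 0 ≤ ‖x‖ ^ (-β - 2) * β ^ 2 := by positivity
    linarith
  obtain ⟨hQ, hR⟩ := alg_bounds (fun j k => a j k x) (fun i j k => lineDeriv ℝ (a j k) x (e3 i))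
    (fun i => x i) (fun i => pF β s u i x) (fun l => yF a l x) (fun l => PF a (pF β s u) l x)
    (wF β s u x) (GW β s x) (HW β s x) (KW β s x) (gF a x) (BF a (pF β s u) x)
    (ZF a (pF β s u) x) M ‖x‖ pn lam hM ha hda hr0.le (by linarith) hxi hpn0 hpi
    (fun _ => rfl) (fun _ => rfl) rfl rfl hlam.le hH0 hg0 hB0
  have hE := conj_identity a hsym u x β s
  have hfin := alg_final (wF β s u x) (GW β s x) (HW β s x) (KW β s x) M ‖x‖ pn lam
    (‖x‖ ^ (-β - 2)) β (‖x‖ ^ β) _ _ _ _ _ _ hM hr0 hpn0 hlam hN hβ hβ2 ht0 ht htβ hG1 hG2 hH1 hH2 hK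
    hQ hR (hE.trans (by rw [TF]; ring)) hD
  have hW2 : WW β s x ^ 2 = ‖x‖ ^ (-s) * Real.exp (‖x‖ ^ (-β)) ^ 2 := by
    rw [WW, mul_pow]
    congr 1
    rw [← Real.rpow_natCast, ← Real.rpow_mul hr0.le]; congr 1; push_cast; ring
  rw [mul_pow, hW2] at hfin
  refine le_trans ?_ hfin
  have hsplit : ‖x‖ ^ (-s - β - 1) = ‖x‖ ^ (-s) * (‖x‖ ^ (-β - 2) * ‖x‖) := by
    rw [show -s - β - 1 = -s + (-β - 2) + 1 by ring, Real.rpow_add hr0, Real.rpow_add hr0,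
      Real.rpow_one, mul_assoc]
  have hgrad := fderiv_norm_sq_le (fderiv ℝ u x)
  have hWg : WW β s x ^ 2 * ∑ i, (fderiv ℝ u x (e3 i)) ^ 2
      ≤ 2 * pn ^ 2 + 2 * (wF β s u x ^ 2 * (|GW β s x| ^ 2 * ‖x‖ ^ 2)) := by
    rw [hpn2, ← hx2, sq_abs, Finset.mul_sum, Finset.mul_sum, Finset.mul_sum, Finset.mul_sum,
      Finset.mul_sum, ← Finset.sum_add_distrib]
    refine Finset.sum_le_sum fun i _ => ?_
    have e : WW β s x * fderiv ℝ u x (e3 i) = pF β s u i x - wF β s u x * GW β s x * x i := by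
      rw [pF, wF]; ring
    calc _ = (WW β s x * fderiv ℝ u x (e3 i)) ^ 2 := by ring
      _ = (pF β s u i x - wF β s u x * GW β s x * x i) ^ 2 := by rw [e]
      _ ≤ _ := by linarith [sq_nonneg (pF β s u i x + wF β s u x * GW β s x * x i)]
  have hN0 : 0 < ‖x‖ ^ (-β - 2) := by linarith
  set N := ‖x‖ ^ (-β - 2) with hNdef
  set w := wF β s u x with hw
  have hfinal : WW β s x ^ 2 * (‖fderiv ℝ u x‖ ^ 2 + u x ^ 2)
      ≤ 2 * pn ^ 2 + 9 * (N ^ 2 * β ^ 2 * ‖x‖ ^ 2 * w ^ 2) := by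
    have q1 : WW β s x ^ 2 * ‖fderiv ℝ u x‖ ^ 2 ≤ 
        WW β s x ^ 2 * ∑ i, (fderiv ℝ u x (e3 i)) ^ 2 := by gcongr
    have q2 : w ^ 2 * (|GW β s x| ^ 2 * ‖x‖ ^ 2) ≤ w ^ 2 * ((2 * (N * β)) ^ 2 * ‖x‖ ^ 2) := by
      gcongr
    have q3 : WW β s x ^ 2 * u x ^ 2 = w ^ 2 := by rw [hw, wF]; ring
    have q4 : 1 ≤ (N * ‖x‖) * β := one_le_mul_of_one_le_of_one_le hNr hβ
    have q5 : w ^ 2 * 1 ≤ w ^ 2 * ((N * ‖x‖) * β) ^ 2 := by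
      gcongr; exact one_le_pow₀ q4
    linarith
  calc _ = lam ^ 2 / 72 * (β ^ 2 * (N * ‖x‖) * (WW β s x ^ 2 * (‖fderiv ℝ u x‖ ^ 2 + u x ^ 2))) := by
        rw [hsplit, hW2]; ring
    _ ≤ lam ^ 2 / 72 * (β ^ 2 * (N * 1) *
        (2 * pn ^ 2 + 9 * (N ^ 2 * β ^ 2 * ‖x‖ ^ 2 * w ^ 2))) := by
        gcongr; linarith
    _ ≤ _ := by
        have : 0 ≤ lam ^ 2 * (N * β ^ 2 * pn ^ 2) := by positivity
        linarith

/-! ### Integration -/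

lemma zero_off {u : E3 → ℝ} {y : E3} (hy : y ∉ tsupport u) :
    u y = 0 ∧ fderiv ℝ u y = 0 ∧ ∀ j k, pd2 u y j k = 0 := by
  have h1 : u =ᶠ[𝓝 y] fun _ => 0 := notMem_tsupport_iff_eventuallyEq.1 hy
  have h2 : fderiv ℝ u =ᶠ[𝓝 y] fun _ => 0 := by
    have := h1.fderiv (𝕜 := ℝ)
    filter_upwards [this] with z hz
    rw [hz]; simp
  refine ⟨h1.eq_of_nhds, h2.eq_of_nhds, fun j k => ?_⟩
  have h3 : (fun z => fderiv ℝ u z (e3 j)) =ᶠ[𝓝 y] fun _ => 0 := by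
    filter_upwards [h2] with z hz
    rw [hz]; simp
  rw [pd2, h3.fderiv_eq]; simp

lemma eventually_off {u : E3 → ℝ} {x : E3} (hx : x ∉ tsupport u) :
    ∀ᶠ y in 𝓝 x, y ∉ tsupport u :=
  (isClosed_tsupport u).isOpen_compl.mem_nhds hx

lemma VF_off (a : Fin 3 → Fin 3 → E3 → ℝ) (β s : ℝ) {u : E3 → ℝ} {y : E3} (hy : y ∉ tsupport u)
    (j : Fin 3) : VF a (wF β s u) (GW β s) (HW β s) (pF β s u) j y = 0 := by
  obtain ⟨h1, h2, -⟩ := zero_off hy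
  simp [VF, PF, BF, TF, ZF, pF, wF, h1, h2]

lemma VF_lip_all {a : Fin 3 → Fin 3 → E3 → ℝ} (ha : ∀ j k x, LipAt (a j k) x) (β s : ℝ)
    {u : E3 → ℝ} (hu : ContDiff ℝ (⊤ : ℕ∞) u) (h0 : (0 : E3) ∉ tsupport u) (j : Fin 3) (x : E3) :
    LipAt (VF a (wF β s u) (GW β s) (HW β s) (pF β s u) j) x := by
  by_cases hx : x ∈ tsupport u
  · have hx0 : x ≠ 0 := fun h => h0 (h ▸ hx)
    have hu1 : ContDiffAt ℝ 1 u x := (hu.of_le (by simp)).contDiffAt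
    have hp1 : ∀ j, ContDiffAt ℝ 1 (fun y => fderiv ℝ u y (e3 j)) x := fun j =>
      ((fderiv_cd hu (e3 j)).of_le (by simp)).contDiffAt
    refine VF_lipAt (fun j k => ha j k x) (.of_contDiffAt ((WW_cd hx0 β s).mul hu1))
      (.of_contDiffAt (GW_cd hx0 β s)) (.of_contDiffAt (HW_cd hx0 β s)) (fun j => ?_) j
    refine .of_contDiffAt ((WW_cd hx0 β s).mul ((hp1 j).add (hu1.mul ((GW_cd hx0 β s).mul ?_))))
    exact (EuclideanSpace.proj j : E3 →L[ℝ] ℝ).contDiff.contDiffAt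
  · refine ⟨0, _, eventually_off hx, ?_⟩
    intro y hy z hz
    rw [VF_off a β s hy, VF_off a β s hz]; simp

lemma integrated (a : Fin 3 → Fin 3 → E3 → ℝ) (hsym : ∀ j k, a j k = a k j)
    {C : Fin 3 → Fin 3 → ℝ≥0} (hlip : ∀ j k, LipschitzWith (C j k) (a j k))
    {lam M β s ρ : ℝ} (hlam : 0 < lam) (hM : 0 ≤ M) (hρ : ρ ≤ 1 / 3)
    (hell : ∀ x : E3, ‖x‖ < ρ → ∀ ξ : Fin 3 → ℝ,
      lam * ∑ j, (ξ j) ^ 2 ≤ ∑ j, ∑ k, a j k x * ξ j * ξ k)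
    (ha : ∀ j k, ∀ x : E3, ‖x‖ < ρ → |a j k x| ≤ M) (hC : ∀ j k, (C j k : ℝ) ≤ M)
    (hβ : 1 ≤ β) (hs : |s| ≤ β ^ 2) (hβ2 : 48000 * M ^ 2 ≤ lam ^ 2 * β)
    {u : E3 → ℝ} (hu : ContDiff ℝ (⊤ : ℕ∞) u) (hcs : HasCompactSupport u)
    (hsupp : tsupport u ⊆ Metric.ball (0 : E3) ρ \ {0}) :
    β ^ 2 * ∫ x : E3, ‖x‖ ^ (-s - β - 1) * Real.exp (‖x‖ ^ (-β)) ^ 2 *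
      (‖fderiv ℝ u x‖ ^ 2 + u x ^ 2) ≤ 36 / lam ^ 2 *
    ∫ x : E3, ‖x‖ ^ (-s) * Real.exp (‖x‖ ^ (-β)) ^ 2 * (∑ j, ∑ k, a j k x * pd2 u x j k) ^ 2 := by
  have h0 : (0 : E3) ∉ tsupport u := fun h => (hsupp h).2 rfl
  set V := fun j => VF a (wF β s u) (GW β s) (HW β s) (pF β s u) j with hV
  have hVlip : ∀ j, ∃ K : ℝ≥0, LipschitzWith K (V j) := fun j => by
    refine lipschitz_of_local (VF_lip_all (fun j k x => ⟨_, univ, univ_mem,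
      (hlip j k).lipschitzOnWith⟩) β s hu h0 j) fun x hx => VF_off a β s (fun h => ?_) j
    have := (hsupp h).1
    rw [mem_ball_zero_iff] at this
    linarith
  have hVcs : ∀ j, HasCompactSupport (V j) := fun j =>
    HasCompactSupport.intro hcs fun x hx => VF_off a β s hx j
  have hVint : ∀ j, Integrable (fun x => lineDeriv ℝ (V j) x (e3 j)) ∧
      ∫ x, lineDeriv ℝ (V j) x (e3 j) = 0 := fun j => by
    obtain ⟨K, hK⟩ := hVlip j
    exact integral_lineDeriv_zero hK (hVcs j) (e3 j)
  have hRint : Integrable (fun x : E3 => ‖x‖ ^ (-s) * Real.exp (‖x‖ ^ (-β)) ^ 2 *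
      (∑ j, ∑ k, a j k x * pd2 u x j k) ^ 2) := by
    refine Continuous.integrable_of_hasCompactSupport ?_ ?_
    · rw [continuous_iff_continuousAt]
      intro x
      by_cases hx : x ∈ tsupport u
      · have hx0 : x ≠ 0 := fun h => h0 (h ▸ hx)
        have hc : ∀ c : ℝ, ContinuousAt (fun z : E3 => ‖z‖ ^ c) x := fun c =>
          (contDiffAt_rp hx0 c (n := 0)).continuousAt
        refine ((hc _).mul ((hc _).rexp.pow 2)).mul (ContinuousAt.pow ?_ 2)
        refine Continuous.continuousAt ?_
        exact continuous_finsetSum _ fun j _ => continuous_finsetSum _ fun k _ =>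
          (hlip j k).continuous.mul (pd2_cont hu j k)
      · refine ContinuousAt.congr (f := fun _ => (0 : ℝ)) continuousAt_const ?_
        filter_upwards [eventually_off hx] with y hy
        simp [(zero_off hy).2.2]
    · refine HasCompactSupport.intro hcs fun x hx => ?_
      simp [(zero_off hx).2.2]
  have hdiff : ∀ᵐ x : E3, ∀ i j k, LineDifferentiableAt ℝ (a j k) x (e3 i) := by
    simp only [ae_all_iff]
    intro i j k
    exact (hlip j k).ae_lineDifferentiableAt (e3 i)
  have hSint : Integrable (fun x => ∑ j, lineDeriv ℝ (V j) x (e3 j)) :=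
    integrable_finsetSum _ fun j _ => (hVint j).1
  have hmono := integral_mono_of_nonneg (μ := (volume : Measure E3))
    (f := fun x => lam ^ 2 / 72 * (β ^ 2 * (‖x‖ ^ (-s - β - 1) * Real.exp (‖x‖ ^ (-β)) ^ 2 *
      (‖fderiv ℝ u x‖ ^ 2 + u x ^ 2))))
    (g := fun x => (‖x‖ ^ (-s) * Real.exp (‖x‖ ^ (-β)) ^ 2 *
      (∑ j, ∑ k, a j k x * pd2 u x j k) ^ 2) / 2 + ∑ j, lineDeriv ℝ (V j) x (e3 j))
    (Eventually.of_forall fun x => by positivity) ((hRint.div_const 2).add hSint) (by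
      filter_upwards [hdiff] with x hx
      by_cases hxs : x ∈ tsupport u
      · have hxb := (hsupp hxs).1
        rw [mem_ball_zero_iff] at hxb
        refine pointwise a hsym hlam hM (fun h => h0 (h ▸ hxs)) (by linarith) (hell x hxb)
          (fun j k => ha j k x hxb) (fun i j k => ?_) hx hβ hs hβ2 hu
        have := norm_lineDeriv_le_of_lipschitz ℝ (hlip j k) (x₀ := x) (v := e3 i)
        rw [e3_norm, mul_one] at this
        exact this.trans (hC j k)
      · obtain ⟨h1, h2, h3⟩ := zero_off hxs
        have h4 : ∀ j, lineDeriv ℝ (V j) x (e3 j) = 0 := fun j => by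
          have : V j =ᶠ[𝓝 x] fun _ => 0 := by
            filter_upwards [eventually_off hxs] with y hy
            exact VF_off a β s hy j
          rw [this.lineDeriv_eq]
          simp [lineDeriv]
        simp [h1, h2, h3, h4])
  rw [integral_add (hRint.div_const 2) hSint, integral_const_mul, integral_const_mul,
    integral_div, integral_finsetSum _ fun j _ => (hVint j).1,
    Finset.sum_eq_zero fun j _ => (hVint j).2, add_zero] at hmono
  rw [div_mul_eq_mul_div, le_div_iff₀ (by positivity)]
  linarith

lemma carleman_aux
    (a : Fin 3 → Fin 3 → EuclideanSpace ℝ (Fin 3) → ℝ)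
    (hsym : ∀ j k, a j k = a k j)
    (hlip : ∀ j k, LocallyLipschitz (a j k))
    (lam : ℝ) (hlam : 0 < lam)
    (hell : ∀ x : EuclideanSpace ℝ (Fin 3), ∀ ξ : Fin 3 → ℝ,
      lam * ∑ j, (ξ j) ^ 2 ≤ ∑ j, ∑ k, a j k x * ξ j * ξ k)
    (s₀ ctilde : ℝ) :
    ∃ β₀ : ℝ, 1 ≤ β₀ ∧ ∃ r₀ ∈ Ioo (0 : ℝ) 1, ∃ C : ℝ, 0 < C ∧
      ∀ β : ℝ, β₀ ≤ β →
      ∀ u : EuclideanSpace ℝ (Fin 3) → ℝ, ContDiff ℝ (⊤ : ℕ∞) u →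
        HasCompactSupport u →
        tsupport u ⊆ Metric.ball (0 : EuclideanSpace ℝ (Fin 3)) r₀ \ {0} →
        β ^ 2 * ∫ x : EuclideanSpace ℝ (Fin 3),
            ‖x‖ ^ (-(s₀ + ctilde * β) - β - 1) * Real.exp (‖x‖ ^ (-β)) ^ 2 *
              (‖fderiv ℝ u x‖ ^ 2 + u x ^ 2)
        ≤ C * ∫ x : EuclideanSpace ℝ (Fin 3),
            ‖x‖ ^ (-(s₀ + ctilde * β)) * Real.exp (‖x‖ ^ (-β)) ^ 2 *
              (∑ j, ∑ k, a j k x * pd2 u x j k) ^ 2 := by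
  have hl : ∀ j k, ∃ K : ℝ≥0, ∃ t ∈ 𝓝 (0 : E3), LipschitzOnWith K (a j k) t := fun j k =>
    hlip j k 0
  choose K t ht hK using hl
  have hext : ∀ j k, ∃ g : E3 → ℝ, LipschitzWith (K j k) g ∧ EqOn (a j k) g (t j k) := fun j k =>
    (hK j k).extend_real
  choose b hb hab using hext
  have hT : (⋂ j, ⋂ k, t j k) ∈ 𝓝 (0 : E3) :=
    iInter_mem.2 fun j => iInter_mem.2 fun k => ht j k
  obtain ⟨ρ, hρ0, hρ⟩ := Metric.mem_nhds_iff.1 hT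
  set at' : Fin 3 → Fin 3 → E3 → ℝ := fun j k => b (min j k) (max j k) with hat
  set C' : Fin 3 → Fin 3 → ℝ≥0 := fun j k => K (min j k) (max j k) with hC'
  have hsym' : ∀ j k, at' j k = at' k j := fun j k => by
    simp only [hat, min_comm, max_comm]
  have hlip' : ∀ j k, LipschitzWith (C' j k) (at' j k) := fun j k => hb _ _
  have heq : ∀ j k, ∀ x : E3, ‖x‖ < ρ → a j k x = at' j k x := fun j k x hx => by
    have h1 : x ∈ t (min j k) (max j k) :=
      mem_iInter.1 (mem_iInter.1 (hρ (mem_ball_zero_iff.2 hx)) _) _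
    have h2 : a j k = a (min j k) (max j k) := by
      rcases le_total j k with h | h
      · rw [min_eq_left h, max_eq_right h]
      · rw [min_eq_right h, max_eq_left h, hsym]
    rw [h2]
    exact hab _ _ h1
  set M : ℝ := ∑ j, ∑ k, (|at' j k 0| + C' j k) with hMdef
  have hM0 : 0 ≤ M := by positivity
  have hMle : ∀ j k, |at' j k 0| + C' j k ≤ M := fun j k => by
    refine le_trans ?_ (Finset.single_le_sum (f := fun j => ∑ k, (|at' j k 0| + (C' j k : ℝ)))
      (fun _ _ => by positivity) (Finset.mem_univ j))
    exact Finset.single_le_sum (f := fun k => |at' j k 0| + (C' j k : ℝ))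
      (fun _ _ => by positivity) (Finset.mem_univ k)
  set σ := |s₀| + |ctilde| with hσ
  have hσ0 : 0 ≤ σ := by positivity
  refine ⟨max 1 (max σ (48000 * M ^ 2 / lam ^ 2)), le_max_left _ _, min ρ (1 / 3),
    ⟨lt_min hρ0 (by norm_num), (min_le_right _ _).trans_lt (by norm_num)⟩, 36 / lam ^ 2,
    by positivity, ?_⟩
  intro β hβ u hu hcs hsupp
  have hβ1 : 1 ≤ β := (le_max_left _ _).trans hβ
  have hβσ : σ ≤ β := ((le_max_left _ _).trans (le_max_right _ _)).trans hβ
  have hβM : 48000 * M ^ 2 / lam ^ 2 ≤ β := ((le_max_right _ _).trans (le_max_right _ _)).trans hβ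
  rw [div_le_iff₀ (by positivity), mul_comm β] at hβM
  have hs : |s₀ + ctilde * β| ≤ β ^ 2 := by
    have h1 := abs_add_le s₀ (ctilde * β)
    rw [abs_mul, abs_of_nonneg (by linarith : 0 ≤ β)] at h1
    have h2 : |s₀| ≤ |s₀| * β := le_mul_of_one_le_right (abs_nonneg _) hβ1
    have h3 : σ * β ≤ β * β := by gcongr
    rw [hσ] at h3
    linarith
  have hfin := integrated at' hsym' hlip' hlam hM0 (min_le_right ρ (1 / 3))
    (fun x hx ξ => by
      refine (hell x ξ).trans_eq ?_
      refine Finset.sum_congr rfl fun j _ => Finset.sum_congr rfl fun k _ => ?_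
      rw [heq j k x (hx.trans_le (min_le_left _ _))])
    (fun j k x hx => by
      have h1 := (hlip' j k).dist_le_mul x 0
      rw [Real.dist_eq, dist_zero_right] at h1
      have h2 : ‖x‖ ≤ 1 := (hx.trans_le (min_le_right _ _)).le.trans (by norm_num)
      have h3 : (C' j k : ℝ) * ‖x‖ ≤ C' j k := mul_le_of_le_one_right (C' j k).2 h2
      have h4 := abs_sub_abs_le_abs_sub (at' j k x) (at' j k 0)
      linarith [hMle j k])
    (fun j k => by linarith [hMle j k, abs_nonneg (at' j k 0)]) hβ1 hs hβM hu hcs hsupp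
  refine hfin.trans_eq ?_
  congr 2
  funext x
  by_cases hx : x ∈ tsupport u
  · have hxb := (hsupp hx).1
    rw [mem_ball_zero_iff] at hxb
    simp only [heq _ _ x (hxb.trans_le (min_le_left _ _))]
  · simp [(zero_off hx).2.2]

end CarlemanHelpers

/-- Carleman estimate for a second-order uniformly elliptic operator
`A = ∑ a_{jk} ∂²_{jk}` with symmetric, locally Lipschitz (`W^{1,∞}_loc`) coefficients:
for all `s₀, c̃` there are `β₀ ≥ 1`, `r₀ ∈ (0,1)` and `C > 0` such that, for `β ≥ β₀`,
`s = s₀ + c̃ β`, `r = |x|`, `ψ = exp(r^{-β})`, and every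
`u ∈ C_c^∞(B_{r₀} ∖ {0})`,
`β² ∫ r^{-s-β-1} ψ² (|∇u|² + |u|²) ≤ C ∫ r^{-s} ψ² |Au|²`. -/
theorem carleman_estimate_second_order
    (a : Fin 3 → Fin 3 → EuclideanSpace ℝ (Fin 3) → ℝ)
    (hsym : ∀ j k, a j k = a k j)
    (hlip : ∀ j k, LocallyLipschitz (a j k))
    (lam : ℝ) (hlam : 0 < lam)
    (hell : ∀ x : EuclideanSpace ℝ (Fin 3), ∀ ξ : Fin 3 → ℝ,
      lam * ∑ j, (ξ j) ^ 2 ≤ ∑ j, ∑ k, a j k x * ξ j * ξ k)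
    (s₀ ctilde : ℝ) :
    ∃ β₀ : ℝ, 1 ≤ β₀ ∧ ∃ r₀ ∈ Ioo (0 : ℝ) 1, ∃ C : ℝ, 0 < C ∧
      ∀ β : ℝ, β₀ ≤ β →
      ∀ u : EuclideanSpace ℝ (Fin 3) → ℝ, ContDiff ℝ (⊤ : ℕ∞) u →
        HasCompactSupport u →
        tsupport u ⊆ Metric.ball (0 : EuclideanSpace ℝ (Fin 3)) r₀ \ {0} →
        β ^ 2 * ∫ x : EuclideanSpace ℝ (Fin 3),
            ‖x‖ ^ (-(s₀ + ctilde * β) - β - 1) * Real.exp (‖x‖ ^ (-β)) ^ 2 *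
              (‖fderiv ℝ u x‖ ^ 2 + u x ^ 2)
        ≤ C * ∫ x : EuclideanSpace ℝ (Fin 3),
            ‖x‖ ^ (-(s₀ + ctilde * β)) * Real.exp (‖x‖ ^ (-β)) ^ 2 *
              (∑ j, ∑ k, a j k x * pd2 u x j k) ^ 2 := by
  exact carleman_aux a hsym hlip lam hlam hell s₀ ctilde
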